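/- Let q ∈ ℋ_c, let q(+∞) = lim_{x→+∞} q(x) and q(−∞) = lim_{x→−∞} q(x), let f(x) = ψ(x)^{-1}∫_{−∞}^{x}(q(y) − Φ(q))ψ(y)dy and f¹(x) = ψ(x)^{-1}∫_{−∞}^{x}(y·q(y) − Φ(v·q(v)))ψ(y)dy. Then: (a) the map x ↦ x·f(x) is monotonically increasing on ℝ, with lim_{x→−∞} x·f(x) = Φ(q) − q(−∞) and lim_{x→+∞} x·f(x) = Φ(q) − q(+∞); (b) the map x ↦ f¹(x) is monotonically increasing on ℝ, with lim_{x→−∞} f¹(x) = −q(−∞) and lim_{x→+∞} f¹(x) = −q(+∞). -/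

import Mathlib

open MeasureTheory Filter

/-- Density of the standard normal distribution. -/
noncomputable def gaussD (x : ℝ) : ℝ := (Real.sqrt (2 * Real.pi))⁻¹ * Real.exp (-(x ^ 2) / 2)

/-- Expectation of `g` with respect to the standard normal distribution, `Φ(g)`. -/
noncomputable def PhiInt (g : ℝ → ℝ) : ℝ := ∫ x, g x * gaussD x

/-- The class `ℋ` of monotonically decreasing, left-continuous functions `ℝ → [0,1]`. -/
def memH (h : ℝ → ℝ) : Prop :=
  (∀ x, h x ∈ Set.Icc (0 : ℝ) 1) ∧ Antitone h ∧
    ∀ x, ContinuousWithinAt h (Set.Iic x) x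

/-- The class `ℋ_c` of members of `ℋ` that are continuous outside some compact interval. -/
def memHc (h : ℝ → ℝ) : Prop :=
  memH h ∧ ∃ K : ℝ, ContinuousOn h (Set.Icc (-K) K)ᶜ

/-- The Stein solution `f` for the function `q`. -/
noncomputable def steinF0 (q : ℝ → ℝ) (x : ℝ) : ℝ :=
  (gaussD x)⁻¹ * ∫ y in Set.Iic x, (q y - PhiInt q) * gaussD y

/-- The Stein solution `f¹` for the function `x·q(x)`. -/
noncomputable def steinF1 (q : ℝ → ℝ) (x : ℝ) : ℝ :=
  (gaussD x)⁻¹ * ∫ y in Set.Iic x, (y * q y - PhiInt (fun v => v * q v)) * gaussD y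

/-!
Let `M = Φ/ψ` be the Mills ratio of the lower tail of the standard normal law. The tail moments
`∫_{-∞}^x (x - y) ^ k ψ(y) dy`, for `k = 1, 2`, are nonnegative, which says precisely that `M` and
`x ↦ x * M x` have nonnegative derivatives, and squeezes `x * M x` to `-1` at `-∞`.

The Stein solution of `g` is `M(-x) ∫_{-∞}^x g ψ - M(x) ∫_x^∞ g ψ`, so an increment of it over
`[a, b]` is a combination of the integrals of `g ψ` over `(-∞, a]`, `(a, b]` and `(b, ∞)` whose
coefficients have signs given by the monotonicity of `M` and `x ↦ x * M x`. The Stein solutions of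
`1` and of `y` are the constants `0` and `-1`; subtracting `q a` or `q b` from a decreasing `q`
therefore preserves the increments, and makes all three terms nonnegative (for `f¹`, provided that
`0 ≤ a`).

At `-∞` both limits are limits of weighted averages of `q` over `(-∞, x]`. The reflection `y ↦ -y`
carries them over to `+∞`, and the monotonicity of `f¹` over to the negative half-line.
-/

open Set Asymptotics
open scoped Topology

section WeightedAverages

variable {q w : ℝ → ℝ} {m x : ℝ}

lemma integral_Iic_pos (hw : IntegrableOn w (Iic x)) (hpos : ∀ y ≤ x, 0 < w y) :
    0 < ∫ y in Iic x, w y := by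
  have hnonneg : 0 ≤ᵐ[volume.restrict (Iic x)] w :=
    ae_restrict_of_forall_mem measurableSet_Iic fun y hy => (hpos y hy).le
  have hsupp : Function.support w ∩ Iic x = Iic x :=
    inter_eq_right.2 fun y hy => (hpos y hy).ne'
  rw [setIntegral_pos_iff_support_of_nonneg_ae hnonneg hw, hsupp, Real.volume_Iic]
  exact ENNReal.zero_lt_top

lemma isLittleO_integral_Iic_atBot {f : ℝ → ℝ} (hfw : f =o[atBot] w)
    (hw : IntegrableAtFilter w atBot) (hnonneg : ∀ᶠ y in atBot, 0 ≤ w y) :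
    (fun x => ∫ y in Iic x, f y) =o[atBot] fun x => ∫ y in Iic x, w y := by
  obtain ⟨a, hwa⟩ := integrableAtFilter_atBot_iff.1 hw
  refine IsLittleO.of_bound fun ε hε => ?_
  filter_upwards [eventually_forall_le_atBot.2 (hfw.def hε), eventually_forall_le_atBot.2 hnonneg,
    eventually_le_atBot a] with x hbound hnonneg_le hxa
  have hw_le : IntegrableOn w (Iic x) := hwa.mono_set (Iic_subset_Iic.2 hxa)
  calc ‖∫ y in Iic x, f y‖
      ≤ ∫ y in Iic x, ε * w y := by
        refine norm_integral_le_of_norm_le (hw_le.const_mul ε) ?_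
        refine ae_restrict_of_forall_mem measurableSet_Iic fun y hy => ?_
        simpa only [Real.norm_of_nonneg (hnonneg_le y hy)] using hbound y hy
    _ = ε * ∫ y in Iic x, w y := integral_const_mul ε w
    _ ≤ ε * ‖∫ y in Iic x, w y‖ := by gcongr; exact Real.le_norm_self _

lemma tendsto_integral_Iic_mul_div_atBot (hq : Tendsto q atBot (𝓝 m))
    (hw : IntegrableAtFilter w atBot) (hqw : IntegrableAtFilter (fun y => q y * w y) atBot)
    (hpos : ∀ᶠ y in atBot, 0 < w y) :
    Tendsto (fun x => (∫ y in Iic x, q y * w y) / ∫ y in Iic x, w y) atBot (𝓝 m) := by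
  have hdiff : (fun y => (q y - m) * w y) =o[atBot] w := by
    simpa only [one_mul] using
      ((isLittleO_one_iff ℝ).2 (tendsto_sub_nhds_zero_iff.2 hq)).mul_isBigO (isBigO_refl w atBot)
  have hvanish := (isLittleO_integral_Iic_atBot hdiff hw
    (hpos.mono fun _ => le_of_lt)).tendsto_div_nhds_zero
  rw [← tendsto_sub_nhds_zero_iff]
  refine hvanish.congr' ?_
  obtain ⟨a, hwa⟩ := integrableAtFilter_atBot_iff.1 hw
  obtain ⟨b, hqwb⟩ := integrableAtFilter_atBot_iff.1 hqw
  filter_upwards [eventually_forall_le_atBot.2 hpos, eventually_le_atBot a, eventually_le_atBot b]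
    with x hpos_le hxa hxb
  have hw_le : IntegrableOn w (Iic x) := hwa.mono_set (Iic_subset_Iic.2 hxa)
  have hqw_le : IntegrableOn (fun y => q y * w y) (Iic x) := hqwb.mono_set (Iic_subset_Iic.2 hxb)
  simp only [sub_mul]
  rw [integral_sub hqw_le (hw_le.const_mul m), integral_const_mul, sub_div,
    mul_div_cancel_right₀ _ (integral_Iic_pos hw_le hpos_le).ne']

end WeightedAverages

section Density

lemma gaussD_eq_gaussianPDFReal : gaussD = ProbabilityTheory.gaussianPDFReal 0 1 := by
  ext x
  simp [gaussD, ProbabilityTheory.gaussianPDFReal]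

lemma gaussD_pos (x : ℝ) : 0 < gaussD x := by
  unfold gaussD
  positivity

lemma gaussD_neg (x : ℝ) : gaussD (-x) = gaussD x := by simp [gaussD]

lemma hasDerivAt_gaussD (x : ℝ) : HasDerivAt gaussD (-(x * gaussD x)) x := by
  have hexponent : HasDerivAt (fun x : ℝ => -(x ^ 2) / 2) (-x) x :=
    ((hasDerivAt_pow 2 x).neg.div_const 2).congr_deriv (by push_cast; ring)
  exact (hexponent.exp.const_mul _).congr_deriv (by unfold gaussD; ring)

lemma continuous_gaussD : Continuous gaussD :=
  continuous_iff_continuousAt.2 fun x => (hasDerivAt_gaussD x).continuousAt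

lemma integrable_pow_mul_gaussD (n : ℕ) : Integrable fun y => y ^ n * gaussD y := by
  have hn : (-1 : ℝ) < n := by linarith [n.cast_nonneg (α := ℝ)]
  refine ((integrable_rpow_mul_exp_neg_mul_sq one_half_pos hn).const_mul
    (√(2 * Real.pi))⁻¹).congr (.of_forall fun y => ?_)
  simp only [Real.rpow_natCast, gaussD, show -(1 / 2 : ℝ) * y ^ 2 = -(y ^ 2) / 2 by ring]
  ring

lemma integrable_gaussD : Integrable gaussD := by
  simpa only [pow_zero, one_mul] using integrable_pow_mul_gaussD 0

lemma integrable_mul_gaussD : Integrable fun y => y * gaussD y := by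
  simpa only [pow_one] using integrable_pow_mul_gaussD 1

lemma integral_gaussD : ∫ y, gaussD y = 1 := by
  rw [gaussD_eq_gaussianPDFReal]
  exact ProbabilityTheory.integral_gaussianPDFReal_eq_one 0 one_ne_zero

lemma integral_Iic_of_hasDerivAt_of_integrable {F f : ℝ → ℝ} (hderiv : ∀ y, HasDerivAt F (f y) y)
    (hf : Integrable f) (hF : Integrable F) (x : ℝ) : ∫ y in Iic x, f y = F x := by
  have hlim : Tendsto F atBot (𝓝 0) :=
    tendsto_zero_of_hasDerivAt_of_integrableOn_Iic (a := x) (fun y _ => hderiv y)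
      hf.integrableOn hF.integrableOn
  rw [integral_Iic_of_hasDerivAt_of_tendsto' (fun y _ => hderiv y) hf.integrableOn hlim, sub_zero]

lemma integral_Iic_mul_gaussD (x : ℝ) : ∫ y in Iic x, y * gaussD y = -gaussD x :=
  integral_Iic_of_hasDerivAt_of_integrable (F := fun y => -gaussD y)
    (fun y => (hasDerivAt_gaussD y).neg.congr_deriv (neg_neg _)) integrable_mul_gaussD
    integrable_gaussD.neg x

lemma integral_mul_gaussD : ∫ y, y * gaussD y = 0 := by
  have hodd := integral_neg_eq_self (fun y => y * gaussD y) volume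
  simp only [gaussD_neg, neg_mul, integral_neg] at hodd
  linarith

end Density

/-- The distribution function `Φ(x)` of the standard normal distribution. -/
noncomputable def gaussCDF (x : ℝ) : ℝ := ∫ y in Iic x, gaussD y

section DistributionFunction

lemma gaussCDF_pos (x : ℝ) : 0 < gaussCDF x :=
  integral_Iic_pos integrable_gaussD.integrableOn fun y _ => gaussD_pos y

lemma gaussCDF_add_gaussCDF_neg (x : ℝ) : gaussCDF x + gaussCDF (-x) = 1 := by
  have hupper : ∫ y in Ioi x, gaussD y = gaussCDF (-x) := by
    simpa only [gaussD_neg, gaussCDF] using integral_comp_neg_Ioi x gaussD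
  rw [← hupper, gaussCDF, intervalIntegral.integral_Iic_add_Ioi integrable_gaussD.integrableOn
    integrable_gaussD.integrableOn, integral_gaussD]

lemma hasDerivAt_gaussCDF (x : ℝ) : HasDerivAt gaussCDF (gaussD x) x := by
  have hsplit : gaussCDF = fun x => gaussCDF 0 + ∫ y in (0 : ℝ)..x, gaussD y := by
    ext x
    rw [← intervalIntegral.integral_Iic_sub_Iic integrable_gaussD.integrableOn
      integrable_gaussD.integrableOn, gaussCDF, gaussCDF, add_sub_cancel]
  rw [hsplit]
  exact (continuous_gaussD.integral_hasStrictDerivAt 0 x).hasDerivAt.const_add _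

lemma integral_Iic_sq_mul_gaussD (x : ℝ) :
    ∫ y in Iic x, y ^ 2 * gaussD y = gaussCDF x - x * gaussD x := by
  have hderiv (y : ℝ) :
      HasDerivAt (fun y => y * gaussD y) (gaussD y - y ^ 2 * gaussD y) y :=
    ((hasDerivAt_id y).mul (hasDerivAt_gaussD y)).congr_deriv (by simp only [id]; ring)
  have hparts := integral_Iic_of_hasDerivAt_of_integrable hderiv
    (integrable_gaussD.sub (integrable_pow_mul_gaussD 2)) integrable_mul_gaussD x
  rw [integral_sub integrable_gaussD.integrableOn (integrable_pow_mul_gaussD 2).integrableOn,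
    ← gaussCDF] at hparts
  linarith

lemma integral_Iic_sub_mul_gaussD (x : ℝ) :
    ∫ y in Iic x, (x - y) * gaussD y = gaussD x + x * gaussCDF x := by
  have hexpand (y : ℝ) : (x - y) * gaussD y = x * gaussD y - y * gaussD y := by ring
  simp only [hexpand]
  rw [integral_sub (integrable_gaussD.const_mul x).integrableOn integrable_mul_gaussD.integrableOn,
    integral_const_mul, integral_Iic_mul_gaussD, gaussCDF]
  ring

lemma integral_Iic_sub_sq_mul_gaussD (x : ℝ) :
    ∫ y in Iic x, (x - y) ^ 2 * gaussD y = (1 + x ^ 2) * gaussCDF x + x * gaussD x := by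
  have hexpand (y : ℝ) : (x - y) ^ 2 * gaussD y =
      y ^ 2 * gaussD y - 2 * x * (y * gaussD y) + x ^ 2 * gaussD y := by ring
  have hquadratic : Integrable fun y => y ^ 2 * gaussD y := integrable_pow_mul_gaussD 2
  have hlinear : Integrable fun y => 2 * x * (y * gaussD y) := integrable_mul_gaussD.const_mul _
  have hdiff : Integrable fun y => y ^ 2 * gaussD y - 2 * x * (y * gaussD y) :=
    hquadratic.sub hlinear
  simp only [hexpand]
  rw [integral_add hdiff.integrableOn (integrable_gaussD.const_mul _).integrableOn,
    integral_sub hquadratic.integrableOn hlinear.integrableOn, integral_const_mul,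
    integral_const_mul, integral_Iic_mul_gaussD, integral_Iic_sq_mul_gaussD, ← gaussCDF]
  ring

end DistributionFunction

/-- The Mills ratio `Φ(x) / ψ(x)` of the lower tail. By symmetry, the usual Mills ratio
`(1 - Φ(x)) / ψ(x)` of the upper tail is `millsRatio (-x)`. -/
noncomputable def millsRatio (x : ℝ) : ℝ := gaussCDF x / gaussD x

section MillsRatio

lemma millsRatio_pos (x : ℝ) : 0 < millsRatio x := div_pos (gaussCDF_pos x) (gaussD_pos x)

lemma one_add_mul_millsRatio_nonneg (x : ℝ) : 0 ≤ 1 + x * millsRatio x := by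
  have hmoment : 0 ≤ ∫ y in Iic x, (x - y) * gaussD y :=
    setIntegral_nonneg measurableSet_Iic fun y hy =>
      mul_nonneg (sub_nonneg.2 hy) (gaussD_pos y).le
  rw [integral_Iic_sub_mul_gaussD] at hmoment
  have hdiv := div_nonneg hmoment (gaussD_pos x).le
  rwa [add_div, div_self (gaussD_pos x).ne', mul_div_assoc] at hdiv

lemma one_add_sq_mul_millsRatio_add_nonneg (x : ℝ) : 0 ≤ (1 + x ^ 2) * millsRatio x + x := by
  have hmoment : 0 ≤ ∫ y in Iic x, (x - y) ^ 2 * gaussD y :=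
    integral_nonneg fun y => mul_nonneg (sq_nonneg _) (gaussD_pos y).le
  rw [integral_Iic_sub_sq_mul_gaussD] at hmoment
  have hdiv := div_nonneg hmoment (gaussD_pos x).le
  rwa [add_div, mul_div_cancel_right₀ _ (gaussD_pos x).ne', mul_div_assoc] at hdiv

lemma hasDerivAt_millsRatio (x : ℝ) : HasDerivAt millsRatio (1 + x * millsRatio x) x := by
  have hne := (gaussD_pos x).ne'
  refine ((hasDerivAt_gaussCDF x).div (hasDerivAt_gaussD x) hne).congr_deriv ?_
  unfold millsRatio
  field_simp
  ring

lemma monotone_millsRatio : Monotone millsRatio :=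
  monotone_of_hasDerivAt_nonneg hasDerivAt_millsRatio one_add_mul_millsRatio_nonneg

lemma monotone_mul_millsRatio : Monotone fun x => x * millsRatio x := by
  refine monotone_of_hasDerivAt_nonneg
    (fun x => (hasDerivAt_id x).mul (hasDerivAt_millsRatio x)) fun x => ?_
  have h := one_add_sq_mul_millsRatio_add_nonneg x
  simp only [Pi.zero_apply, id]
  linarith

lemma tendsto_mul_millsRatio_atBot : Tendsto (fun x => x * millsRatio x) atBot (𝓝 (-1)) := by
  have hupper : Tendsto (fun x : ℝ => -1 + x⁻¹ ^ 2) atBot (𝓝 (-1)) := by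
    simpa using (tendsto_inv_atBot_zero.pow 2).const_add (-1 : ℝ)
  refine tendsto_of_tendsto_of_tendsto_of_le_of_le' tendsto_const_nhds hupper
    (.of_forall fun x => by linarith [one_add_mul_millsRatio_nonneg x]) ?_
  filter_upwards [eventually_lt_atBot 0] with x hx
  have hlow := one_add_mul_millsRatio_nonneg x
  have hsq : x ^ 2 * (1 + x * millsRatio x) ≤ 1 := by
    nlinarith [one_add_sq_mul_millsRatio_add_nonneg x]
  have hdiv := (le_div_iff₀' (sq_pos_of_neg hx)).2 hsq
  rw [one_div, ← inv_pow] at hdiv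
  linarith

lemma tendsto_millsRatio_atBot : Tendsto millsRatio atBot (𝓝 0) := by
  have h := tendsto_inv_atBot_zero.mul tendsto_mul_millsRatio_atBot
  rw [zero_mul] at h
  refine h.congr' ?_
  filter_upwards [eventually_ne_atBot 0] with x hx
  exact inv_mul_cancel_left₀ hx _

end MillsRatio

section SteinSolutions

variable {g h q : ℝ → ℝ}

lemma integral_Iic_sub_PhiInt_mul_gaussD (hg : Integrable fun y => g y * gaussD y) (x : ℝ) :
    ∫ y in Iic x, (g y - PhiInt g) * gaussD y =
      (∫ y in Iic x, g y * gaussD y) - PhiInt g * gaussCDF x := by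
  simp only [sub_mul]
  rw [integral_sub hg.integrableOn (integrable_gaussD.const_mul _).integrableOn,
    integral_const_mul, gaussCDF]

lemma steinF0_eq (hg : Integrable fun y => g y * gaussD y) (x : ℝ) :
    steinF0 g x = millsRatio (-x) * (∫ y in Iic x, g y * gaussD y) -
      millsRatio x * ∫ y in Ioi x, g y * gaussD y := by
  have hsplit : PhiInt g = (∫ y in Iic x, g y * gaussD y) + ∫ y in Ioi x, g y * gaussD y :=
    (intervalIntegral.integral_Iic_add_Ioi hg.integrableOn hg.integrableOn).symm
  have hcompl : gaussCDF (-x) = 1 - gaussCDF x := by linarith [gaussCDF_add_gaussCDF_neg x]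
  rw [steinF0, integral_Iic_sub_PhiInt_mul_gaussD hg, hsplit, millsRatio, millsRatio,
    gaussD_neg, hcompl]
  ring

lemma mul_steinF0_sub_mul_steinF0 (hg : Integrable fun y => g y * gaussD y)
    {a b : ℝ} (hab : a ≤ b) (c d : ℝ) :
    d * steinF0 g b - c * steinF0 g a =
      (d * millsRatio (-b) - c * millsRatio (-a)) * (∫ y in Iic a, g y * gaussD y) +
        (d * millsRatio (-b) + c * millsRatio a) * (∫ y in Ioc a b, g y * gaussD y) +
        (c * millsRatio a - d * millsRatio b) * ∫ y in Ioi b, g y * gaussD y := by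
  have hlower : ∫ y in Iic b, g y * gaussD y =
      (∫ y in Iic a, g y * gaussD y) + ∫ y in Ioc a b, g y * gaussD y := by
    rw [← Iic_union_Ioc_eq_Iic hab]
    exact setIntegral_union (Iic_disjoint_Ioc le_rfl) measurableSet_Ioc hg.integrableOn
      hg.integrableOn
  have hupper : ∫ y in Ioi a, g y * gaussD y =
      (∫ y in Ioc a b, g y * gaussD y) + ∫ y in Ioi b, g y * gaussD y := by
    rw [← Ioc_union_Ioi_eq_Ioi hab]
    exact setIntegral_union (Ioc_disjoint_Ioi le_rfl) measurableSet_Ioi hg.integrableOn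
      hg.integrableOn
  rw [steinF0_eq hg, steinF0_eq hg, hlower, hupper]
  ring

lemma steinF0_sub_const_mul (hg : Integrable fun y => g y * gaussD y)
    (hh : Integrable fun y => h y * gaussD y) (c x : ℝ) :
    steinF0 (fun y => g y - c * h y) x = steinF0 g x - c * steinF0 h x := by
  have hexpand (y : ℝ) : (g y - c * h y) * gaussD y = g y * gaussD y - c * (h y * gaussD y) := by
    ring
  have hgh : Integrable fun y => (g y - c * h y) * gaussD y := by
    simpa only [hexpand, Pi.sub_def] using hg.sub (hh.const_mul c)
  rw [steinF0_eq hgh, steinF0_eq hg, steinF0_eq hh]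
  simp only [hexpand]
  rw [integral_sub hg.integrableOn (hh.const_mul c).integrableOn,
    integral_sub hg.integrableOn (hh.const_mul c).integrableOn, integral_const_mul,
    integral_const_mul]
  ring

lemma steinF0_one (x : ℝ) : steinF0 (fun _ => 1) x = 0 := by
  simp [steinF0, PhiInt, integral_gaussD]

lemma steinF0_id (x : ℝ) : steinF0 (fun y => y) x = -1 := by
  simp [steinF0, PhiInt, integral_mul_gaussD, integral_Iic_mul_gaussD, (gaussD_pos x).ne']

lemma steinF0_sub_const (hg : Integrable fun y => g y * gaussD y) (c x : ℝ) :
    steinF0 (fun y => g y - c) x = steinF0 g x := by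
  have h := steinF0_sub_const_mul (h := fun _ => 1) hg
    (by simpa only [one_mul] using integrable_gaussD) c x
  simpa only [mul_one, steinF0_one, mul_zero, sub_zero] using h

lemma PhiInt_comp_neg (g : ℝ → ℝ) : PhiInt (fun y => g (-y)) = PhiInt g := by
  simpa only [PhiInt, gaussD_neg] using integral_neg_eq_self (fun y => g y * gaussD y) volume

lemma integrable_comp_neg_mul_gaussD (hg : Integrable fun y => g y * gaussD y) :
    Integrable fun y => g (-y) * gaussD y := by
  simpa only [gaussD_neg] using hg.comp_neg

lemma steinF0_comp_neg (hg : Integrable fun y => g y * gaussD y) (x : ℝ) :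
    steinF0 (fun y => g (-y)) x = -steinF0 g (-x) := by
  have hIic := integral_comp_neg_Iic x fun y => g y * gaussD y
  have hIoi := integral_comp_neg_Ioi x fun y => g y * gaussD y
  simp only [gaussD_neg] at hIic hIoi
  rw [steinF0_eq hg, steinF0_eq (integrable_comp_neg_mul_gaussD hg), hIic, hIoi,
    neg_neg]
  ring

lemma steinF1_eq_steinF0 (q : ℝ → ℝ) : steinF1 q = steinF0 fun y => y * q y := rfl

lemma steinF1_sub_const (hq : Integrable fun y => y * q y * gaussD y) (c x : ℝ) :
    steinF1 (fun y => q y - c) x = steinF1 q x + c := by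
  have h := steinF0_sub_const_mul hq integrable_mul_gaussD c x
  rw [steinF0_id, mul_neg_one, sub_neg_eq_add] at h
  simpa only [steinF1_eq_steinF0, mul_sub, mul_comm _ c] using h

lemma steinF1_neg_comp_neg (hq : Integrable fun y => y * q y * gaussD y) (x : ℝ) :
    steinF1 (fun y => -q (-y)) x = -steinF1 q (-x) := by
  simpa only [steinF1_eq_steinF0, neg_mul, mul_neg] using steinF0_comp_neg hq x

lemma integrable_mul_neg_comp_neg_mul_gaussD (hq : Integrable fun y => y * q y * gaussD y) :
    Integrable fun y => y * -q (-y) * gaussD y := by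
  simpa only [neg_mul, mul_neg] using integrable_comp_neg_mul_gaussD hq

end SteinSolutions

section Monotonicity

variable {q : ℝ → ℝ}

lemma monotone_mul_steinF0 (hq : Antitone q)
    (hint : Integrable fun y => q y * gaussD y) : Monotone fun x => x * steinF0 q x := by
  intro a b hab
  set β := b * millsRatio (-b) + a * millsRatio a
  obtain ⟨c, hca, hbc, hβ⟩ :
      ∃ c ≤ q a, q b ≤ c ∧ ∀ y ∈ Ioc a b, 0 ≤ β * (q y - c) := by
    rcases le_total 0 β with hβ | hβ
    · exact ⟨q b, hq hab, le_rfl, fun y hy => mul_nonneg hβ (sub_nonneg.2 (hq hy.2))⟩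
    · exact ⟨q a, le_rfl, hq hab,
        fun y hy => mul_nonneg_of_nonpos_of_nonpos hβ (sub_nonpos.2 (hq hy.1.le))⟩
  have hint' : Integrable fun y => (q y - c) * gaussD y := by
    simpa only [sub_mul, Pi.sub_def] using hint.sub (integrable_gaussD.const_mul c)
  have hleft : 0 ≤ ∫ y in Iic a, (q y - c) * gaussD y :=
    setIntegral_nonneg measurableSet_Iic fun y hy =>
      mul_nonneg (sub_nonneg.2 (hca.trans (hq hy))) (gaussD_pos y).le
  have hmiddle : 0 ≤ β * ∫ y in Ioc a b, (q y - c) * gaussD y := by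
    rw [← integral_const_mul]
    refine setIntegral_nonneg measurableSet_Ioc fun y hy => ?_
    rw [← mul_assoc]
    exact mul_nonneg (hβ y hy) (gaussD_pos y).le
  have hright : ∫ y in Ioi b, (q y - c) * gaussD y ≤ 0 :=
    setIntegral_nonpos measurableSet_Ioi fun y hy =>
      mul_nonpos_of_nonpos_of_nonneg (sub_nonpos.2 ((hq (le_of_lt hy)).trans hbc))
        (gaussD_pos y).le
  have hα : 0 ≤ b * millsRatio (-b) - a * millsRatio (-a) := by
    linarith [monotone_mul_millsRatio (neg_le_neg hab)]
  have hγ : a * millsRatio a - b * millsRatio b ≤ 0 := sub_nonpos.2 (monotone_mul_millsRatio hab)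
  have hincrement := mul_steinF0_sub_mul_steinF0 hint' hab a b
  rw [steinF0_sub_const hint, steinF0_sub_const hint] at hincrement
  refine sub_nonneg.1 (hincrement.symm ▸ ?_)
  exact add_nonneg (add_nonneg (mul_nonneg hα hleft) hmiddle)
    (mul_nonneg_of_nonpos_of_nonpos hγ hright)

lemma integral_Iic_id_mul_antitone_nonpos (hq : Antitone q)
    (hint : Integrable fun y => y * q y * gaussD y) {a : ℝ} (ha : 0 ≤ a) (hqa : 0 ≤ q a) :
    ∫ y in Iic a, y * q y * gaussD y ≤ 0 := by
  calc ∫ y in Iic a, y * q y * gaussD y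
      ≤ ∫ y in Iic a, q 0 * (y * gaussD y) := by
        refine setIntegral_mono_on hint.integrableOn
          (integrable_mul_gaussD.const_mul _).integrableOn measurableSet_Iic fun y _ => ?_
        rw [← mul_assoc, mul_comm (q 0)]
        gcongr ?_ * _
        · exact (gaussD_pos y).le
        · rcases le_total y 0 with hy | hy
          · exact mul_le_mul_of_nonpos_left (hq hy) hy
          · exact mul_le_mul_of_nonneg_left (hq hy) hy
    _ = -(q 0 * gaussD a) := by rw [integral_const_mul, integral_Iic_mul_gaussD, mul_neg]
    _ ≤ 0 := neg_nonpos.2 (mul_nonneg (hqa.trans (hq ha)) (gaussD_pos a).le)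

lemma monotoneOn_Ici_steinF1 (hq : Antitone q)
    (hint : Integrable fun y => y * q y * gaussD y) :
    MonotoneOn (steinF1 q) (Ici 0) := by
  intro a ha b _ hab
  have ha' : 0 ≤ a := ha
  have hint' : Integrable fun y => y * (q y - q b) * gaussD y :=
    (hint.sub (integrable_mul_gaussD.const_mul (q b))).congr
      (.of_forall fun y => by simp only [Pi.sub_apply]; ring)
  have hleft : ∫ y in Iic a, y * (q y - q b) * gaussD y ≤ 0 :=
    integral_Iic_id_mul_antitone_nonpos (fun y z hyz => sub_le_sub_right (hq hyz) _) hint' ha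
      (sub_nonneg.2 (hq hab))
  have hmiddle : 0 ≤ ∫ y in Ioc a b, y * (q y - q b) * gaussD y :=
    setIntegral_nonneg measurableSet_Ioc fun y hy =>
      mul_nonneg (mul_nonneg (ha'.trans hy.1.le) (sub_nonneg.2 (hq hy.2))) (gaussD_pos y).le
  have hright : ∫ y in Ioi b, y * (q y - q b) * gaussD y ≤ 0 :=
    setIntegral_nonpos measurableSet_Ioi fun y hy => by
      have hby : b ≤ y := le_of_lt hy
      exact mul_nonpos_of_nonpos_of_nonneg (mul_nonpos_of_nonneg_of_nonpos
        (ha'.trans (hab.trans hby)) (sub_nonpos.2 (hq hby))) (gaussD_pos y).le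
  have hα : millsRatio (-b) - millsRatio (-a) ≤ 0 :=
    sub_nonpos.2 (monotone_millsRatio (neg_le_neg hab))
  have hβ : 0 ≤ millsRatio (-b) + millsRatio a :=
    (add_pos (millsRatio_pos _) (millsRatio_pos _)).le
  have hγ : millsRatio a - millsRatio b ≤ 0 := sub_nonpos.2 (monotone_millsRatio hab)
  have hincrement := mul_steinF0_sub_mul_steinF0 hint' hab 1 1
  simp only [one_mul, ← steinF1_eq_steinF0 fun y => q y - q b, steinF1_sub_const hint,
    add_sub_add_right_eq_sub] at hincrement
  refine sub_nonneg.1 (hincrement.symm ▸ ?_)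
  exact add_nonneg (add_nonneg (mul_nonneg_of_nonpos_of_nonpos hα hleft) (mul_nonneg hβ hmiddle))
    (mul_nonneg_of_nonpos_of_nonpos hγ hright)

lemma monotone_steinF1 (hq : Antitone q)
    (hint : Integrable fun y => y * q y * gaussD y) :
    Monotone (steinF1 q) := by
  refine MonotoneOn.Iic_union_Ici (a := 0) ?_ (monotoneOn_Ici_steinF1 hq hint)
  have hreflected := monotoneOn_Ici_steinF1 (q := fun y => -q (-y))
    (fun y z hyz => neg_le_neg (hq (neg_le_neg hyz)))
    (integrable_mul_neg_comp_neg_mul_gaussD hint)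
  intro a ha b hb hab
  have h := hreflected (mem_Ici.2 (neg_nonneg.2 hb)) (mem_Ici.2 (neg_nonneg.2 ha)) (neg_le_neg hab)
  simpa only [steinF1_neg_comp_neg hint, neg_neg, neg_le_neg_iff] using h

end Monotonicity

section Limits

variable {q : ℝ → ℝ} {m : ℝ}

lemma tendsto_mul_steinF0_atBot (hint : Integrable fun y => q y * gaussD y)
    (hq : Tendsto q atBot (𝓝 m)) :
    Tendsto (fun x => x * steinF0 q x) atBot (𝓝 (PhiInt q - m)) := by
  have haverage := tendsto_integral_Iic_mul_div_atBot hq (integrable_gaussD.integrableAtFilter _)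
    (hint.integrableAtFilter _) (.of_forall gaussD_pos)
  have hprod := tendsto_mul_millsRatio_atBot.mul (haverage.sub_const (PhiInt q))
  rw [show -1 * (m - PhiInt q) = PhiInt q - m by ring] at hprod
  refine hprod.congr fun x => ?_
  have hcdf := (gaussCDF_pos x).ne'
  rw [steinF0, integral_Iic_sub_PhiInt_mul_gaussD hint, ← gaussCDF, millsRatio]
  field_simp

lemma tendsto_mul_steinF0_atTop (hint : Integrable fun y => q y * gaussD y)
    (hq : Tendsto q atTop (𝓝 m)) :
    Tendsto (fun x => x * steinF0 q x) atTop (𝓝 (PhiInt q - m)) := by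
  have h := (tendsto_mul_steinF0_atBot (integrable_comp_neg_mul_gaussD hint)
    (hq.comp tendsto_neg_atBot_atTop)).comp tendsto_neg_atTop_atBot
  simpa only [Function.comp_def, PhiInt_comp_neg, steinF0_comp_neg hint, neg_neg,
    neg_mul_neg] using h

lemma tendsto_steinF1_atBot (hint : Integrable fun y => y * q y * gaussD y)
    (hq : Tendsto q atBot (𝓝 m)) :
    Tendsto (steinF1 q) atBot (𝓝 (-m)) := by
  have hint' : Integrable fun y => q y * -(y * gaussD y) :=
    hint.neg.congr (.of_forall fun y => by simp only [Pi.neg_apply]; ring)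
  have haverage := tendsto_integral_Iic_mul_div_atBot hq
    (integrable_mul_gaussD.neg.integrableAtFilter atBot) (hint'.integrableAtFilter atBot)
    ((eventually_lt_atBot 0).mono fun y hy => neg_pos.2 (mul_neg_of_neg_of_pos hy (gaussD_pos y)))
  have hsum := haverage.neg.sub
    (tendsto_millsRatio_atBot.const_mul (PhiInt fun y => y * q y))
  rw [mul_zero, sub_zero] at hsum
  refine hsum.congr fun x => ?_
  have hnumerator : ∫ y in Iic x, q y * -(y * gaussD y) = -∫ y in Iic x, y * q y * gaussD y := by
    rw [← integral_neg]
    exact integral_congr_ae (.of_forall fun y => by ring)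
  simp only [Pi.neg_apply]
  rw [steinF1, integral_Iic_sub_PhiInt_mul_gaussD hint, hnumerator, integral_neg,
    integral_Iic_mul_gaussD, millsRatio]
  ring

lemma tendsto_steinF1_atTop (hint : Integrable fun y => y * q y * gaussD y)
    (hq : Tendsto q atTop (𝓝 m)) :
    Tendsto (steinF1 q) atTop (𝓝 (-m)) := by
  have h := (tendsto_steinF1_atBot (q := fun y => -q (-y))
    (integrable_mul_neg_comp_neg_mul_gaussD hint)
    (hq.comp tendsto_neg_atBot_atTop).neg).comp tendsto_neg_atTop_atBot
  simpa only [Function.comp_def, steinF1_neg_comp_neg hint, neg_neg] using h.neg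

end Limits

lemma integrable_mul_of_antitone_of_tendsto {q w : ℝ → ℝ} {qp qm : ℝ} (hq : Antitone q)
    (hqp : Tendsto q atTop (𝓝 qp)) (hqm : Tendsto q atBot (𝓝 qm)) (hw : Integrable w) :
    Integrable fun y => q y * w y :=
  hw.bdd_mul (c := max |qp| |qm|) hq.measurable.aestronglyMeasurable (.of_forall fun y =>
    abs_le_max_abs_abs (hq.le_of_tendsto hqp y) (hq.ge_of_tendsto hqm y))

theorem stein_solution_monotone_limits_general (q : ℝ → ℝ) (hq : Antitone q) (qp qm : ℝ)
    (hqp : Tendsto q atTop (nhds qp)) (hqm : Tendsto q atBot (nhds qm)) :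
    (Monotone (fun x => x * steinF0 q x) ∧
      Tendsto (fun x => x * steinF0 q x) atBot (nhds (PhiInt q - qm)) ∧
      Tendsto (fun x => x * steinF0 q x) atTop (nhds (PhiInt q - qp))) ∧
    (Monotone (steinF1 q) ∧
      Tendsto (steinF1 q) atBot (nhds (-qm)) ∧
      Tendsto (steinF1 q) atTop (nhds (-qp))) := by
  have hint : Integrable fun y => q y * gaussD y :=
    integrable_mul_of_antitone_of_tendsto hq hqp hqm integrable_gaussD
  have hint_id : Integrable fun y => y * q y * gaussD y :=
    (integrable_mul_of_antitone_of_tendsto hq hqp hqm integrable_mul_gaussD).congr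
      (.of_forall fun y => by ring)
  exact ⟨⟨monotone_mul_steinF0 hq hint, tendsto_mul_steinF0_atBot hint hqm,
      tendsto_mul_steinF0_atTop hint hqp⟩,
    monotone_steinF1 hq hint_id, tendsto_steinF1_atBot hint_id hqm,
    tendsto_steinF1_atTop hint_id hqp⟩

/-- for `q ∈ ℋ_c` with limits `qp` at `+∞` and `qm` at `−∞`,
the maps `x ↦ x·f(x)` and `x ↦ f¹(x)` are monotonically increasing with the stated limits. -/
theorem stein_solution_monotone_limits (q : ℝ → ℝ) (hq : memHc q) (qp qm : ℝ)
    (hqp : Tendsto q atTop (nhds qp)) (hqm : Tendsto q atBot (nhds qm)) :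
    (Monotone (fun x => x * steinF0 q x) ∧
      Tendsto (fun x => x * steinF0 q x) atBot (nhds (PhiInt q - qm)) ∧
      Tendsto (fun x => x * steinF0 q x) atTop (nhds (PhiInt q - qp))) ∧
    (Monotone (steinF1 q) ∧
      Tendsto (steinF1 q) atBot (nhds (-qm)) ∧
      Tendsto (steinF1 q) atTop (nhds (-qp))) :=
  stein_solution_monotone_limits_general q hq.1.2.1 qp qm hqp hqm
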